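/- Let F be a field, n ≥ 1 an integer, and let A be an étale subalgebra of Mₙ(F) of dimension n, i.e. a commutative F-subalgebra A of the n×n matrices over F such that A is reduced (its only nilpotent element is 0) and dim_F A = n. Then for every a ∈ A, the trace of the F-linear endomorphism of A given by multiplication by a (the algebra trace tr_{A/F}(a)) equals the matrix trace of a as an element of Mₙ(F). -/

import Mathlib

set_option synthInstance.maxHeartbeats 400000

/-!
A reduced Artinian ring `A` is semisimple and its idempotents are central. Hence a faithful
`A`-module `V` has a vector `v` with zero annihilator: if the annihilator of `v` contains an
idempotent `e ≠ 0`, then some `e • w` is nonzero, and `e • w + v` has a strictly smaller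
annihilator than `v`. When `dim A = dim V`, the map `x ↦ x • v` is therefore an isomorphism
`A ≃ V` of `A`-modules, and it conjugates multiplication by `a` on `A` to the action of `a` on `V`.
-/

section ReducedRing

variable {R : Type*} [Ring R] [IsReduced R]

theorem commute_of_isIdempotentElem_of_isReduced {e : R} (he : IsIdempotentElem e) (r : R) :
    Commute e r := by
  have h_left : e * r * (1 - e) = 0 := by
    refine IsNilpotent.eq_zero ⟨2, ?_⟩
    calc (e * r * (1 - e)) ^ 2 = e * r * ((1 - e) * e) * (r * (1 - e)) := by noncomm_ring
      _ = 0 := by rw [he.one_sub_mul_self, mul_zero, zero_mul]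
  have h_right : (1 - e) * r * e = 0 := by
    refine IsNilpotent.eq_zero ⟨2, ?_⟩
    calc ((1 - e) * r * e) ^ 2 = (1 - e) * r * (e * (1 - e)) * (r * e) := by noncomm_ring
      _ = 0 := by rw [he.mul_one_sub_self, mul_zero, zero_mul]
  calc e * r = e * r * (1 - e) + e * r * e := by noncomm_ring
    _ = (1 - e) * r * e + e * r * e := by rw [h_left, h_right]
    _ = r * e := by noncomm_ring

theorem isSemisimpleRing_of_isArtinianRing_of_isReduced [IsArtinianRing R] : IsSemisimpleRing R :=
  IsArtinianRing.isSemisimpleRing_iff_jacobson.mpr IsSemiprimaryRing.isNilpotent.eq_zero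

end ReducedRing

theorem exists_isIdempotentElem_mem_of_ne_bot {R : Type*} [Ring R] [IsSemisimpleRing R]
    {I : Ideal R} (hI : I ≠ ⊥) : ∃ e ∈ I, IsIdempotentElem e ∧ e ≠ 0 := by
  obtain ⟨e, he, rfl⟩ := IsSemisimpleRing.ideal_eq_span_idempotent I
  exact ⟨e, Ideal.mem_span_singleton_self e, he, mt Ideal.span_singleton_eq_bot.mpr hI⟩

theorem torsionOf_add_eq_inf {R M : Type*} [Semiring R] [AddCommMonoid M] [Module R M]
    {e : R} (he : ∀ r, Commute e r) {u v : M} (hu : e • u = u) (hv : e • v = 0) :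
    Ideal.torsionOf R M (u + v) = Ideal.torsionOf R M u ⊓ Ideal.torsionOf R M v := by
  ext r
  simp only [Submodule.mem_inf, Ideal.mem_torsionOf_iff]
  refine ⟨fun hr ↦ ?_, fun ⟨hru, hrv⟩ ↦ by rw [smul_add, hru, hrv, add_zero]⟩
  have hru : r • u = 0 :=
    calc r • u = r • e • (u + v) := by rw [smul_add, hu, hv, add_zero]
      _ = e • r • (u + v) := by rw [smul_smul, smul_smul, (he r).eq]
      _ = 0 := by rw [hr, smul_zero]
  exact ⟨hru, by rwa [smul_add, hru, zero_add] at hr⟩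

theorem exists_torsionOf_eq_bot (R M : Type*) [Ring R] [IsReduced R] [IsArtinianRing R]
    [AddCommGroup M] [Module R M] [FaithfulSMul R M] :
    ∃ v : M, Ideal.torsionOf R M v = ⊥ := by
  have : IsSemisimpleRing R := isSemisimpleRing_of_isArtinianRing_of_isReduced
  obtain ⟨v, -, hmin⟩ :=
    exists_minimalFor_of_wellFoundedLT (fun _ : M ↦ True) (Ideal.torsionOf R M) ⟨0, trivial⟩
  refine ⟨v, by_contra fun hv ↦ ?_⟩
  obtain ⟨e, hev, he, he_ne⟩ := exists_isIdempotentElem_mem_of_ne_bot hv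
  refine he_ne (FaithfulSMul.eq_of_smul_eq_smul (α := M) fun w ↦ ?_)
  have heew : e • e • w = e • w := by rw [smul_smul, he.eq]
  have h_inf := torsionOf_add_eq_inf (commute_of_isIdempotentElem_of_isReduced he) heew hev
  have h_le : Ideal.torsionOf R M v ≤ Ideal.torsionOf R M (e • w) :=
    (hmin trivial (h_inf.trans_le inf_le_right)).trans (h_inf.trans_le inf_le_left)
  have heew_zero : e • e • w = 0 := h_le hev
  rw [← heew, heew_zero, zero_smul]

section Trace

variable {F A V : Type*} [Ring A] [AddCommGroup V] [Module A V]

theorem trace_mulLeft_eq_trace_lsmul_of_linearEquiv [CommRing F] [Algebra F A] [Module F V]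
    [IsScalarTower F A V] (φ : A ≃ₗ[A] V) (a : A) :
    LinearMap.trace F A (LinearMap.mulLeft F a) = LinearMap.trace F V (Algebra.lsmul F F V a) := by
  rw [← LinearMap.trace_conj' _ (φ.restrictScalars F)]
  congr 1
  ext v
  simp [LinearEquiv.conj_apply, ← smul_eq_mul]

variable [Field F] [Algebra F A] [Module F V] [IsScalarTower F A V]
  [Module.Finite F A] [Module.Finite F V] [IsReduced A] [FaithfulSMul A V]

theorem nonempty_linearEquiv_of_finrank_eq (h : Module.finrank F A = Module.finrank F V) :
    Nonempty (A ≃ₗ[A] V) := by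
  have := IsArtinianRing.of_finite F A
  obtain ⟨v, hv⟩ := exists_torsionOf_eq_bot A V
  let φ : A →ₗ[A] V := LinearMap.toSpanSingleton A V v
  have h_inj : Function.Injective φ := LinearMap.ker_eq_bot.mp hv
  have h_surj : Function.Surjective φ :=
    (LinearMap.injective_iff_surjective_of_finrank_eq_finrank (f := φ.restrictScalars F) h).mp h_inj
  exact ⟨LinearEquiv.ofBijective φ ⟨h_inj, h_surj⟩⟩

theorem trace_mulLeft_eq_trace_lsmul_of_finrank_eq
    (h : Module.finrank F A = Module.finrank F V) (a : A) :
    LinearMap.trace F A (LinearMap.mulLeft F a) = LinearMap.trace F V (Algebra.lsmul F F V a) :=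
  let ⟨φ⟩ := nonempty_linearEquiv_of_finrank_eq h
  trace_mulLeft_eq_trace_lsmul_of_linearEquiv φ a

end Trace

theorem etale_subalgebra_algebra_trace_eq_matrix_trace_general {F ι : Type*} [Field F] [Fintype ι]
    [DecidableEq ι] (A : Subalgebra F (Matrix ι ι F)) [IsReduced A]
    (hdim : Module.finrank F A = Fintype.card ι) (a : A) :
    LinearMap.trace F A (LinearMap.mulLeft F a) = Matrix.trace (a : Matrix ι ι F) := by
  have : FaithfulSMul A (ι → F) :=
    ⟨fun h ↦ Subtype.ext (Matrix.ext_iff_smul.mpr h)⟩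
  have h_lsmul : Algebra.lsmul F F (ι → F) a = Matrix.toLin' (a : Matrix ι ι F) := rfl
  rw [trace_mulLeft_eq_trace_lsmul_of_finrank_eq (V := ι → F) (by simpa using hdim),
    ← Matrix.trace_toLin'_eq, h_lsmul]

/-- For an étale (commutative, reduced) subalgebra `A ⊆ Mₙ(F)` of dimension
`n`, the algebra trace `tr_{A/F}(a)` (the trace of multiplication by `a` as an
`F`-linear endomorphism of `A`) equals the matrix trace of `a`. -/
theorem etale_subalgebra_algebra_trace_eq_matrix_trace
    (F : Type*) [Field F] (n : ℕ) (hn : 1 ≤ n)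
    (A : Subalgebra F (Matrix (Fin n) (Fin n) F))
    (hcomm : ∀ a ∈ A, ∀ b ∈ A, a * b = b * a)
    (hred : ∀ a ∈ A, IsNilpotent a → a = 0)
    (hdim : Module.finrank F ↥A = n)
    (a : Matrix (Fin n) (Fin n) F) (ha : a ∈ A) :
    LinearMap.trace F ↥A (LinearMap.mulLeft F (⟨a, ha⟩ : ↥A)) = Matrix.trace a := by
  have : IsReduced A := ⟨fun x hx ↦ Subtype.ext (hred x x.2 (hx.map A.val))⟩
  exact etale_subalgebra_algebra_trace_eq_matrix_trace_general A (by simpa using hdim) ⟨a, ha⟩
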